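/- Let m_1, m_2 ∈ R^p, σ_1, σ_2 > 0, and A = (A_1,...,A_p) with i.i.d. N(0,1) entries. Given γ > 0, set α = γ²(σ_1+σ_2)²p/||m_1-m_2||². Then for any τ > 0, P(|⟨m_1-m_2, A/||A||⟩| ≥ γ(σ_1+σ_2)) ≥ P(A_1² > α(1-1/p)(1+τ)/(1-α/p)) · (1 - e^{-(p-1)(τ - log(1+τ))/2}). -/

import Mathlib

open MeasureTheory ProbabilityTheory

lemma aux_exp_sq_lint (s : ℝ) (hs : s < 1 / 2) :
    Integrable (fun x : ℝ => Real.exp (s * x ^ 2)) (gaussianReal 0 1) ∧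
    ∫ x, Real.exp (s * x ^ 2) ∂(gaussianReal 0 1) = Real.sqrt (1 / (1 - 2 * s)) := by
  have hb : 0 < 1 / 2 - s := by linarith
  have key : ∀ x : ℝ, gaussianPDFReal 0 1 x * Real.exp (s * x ^ 2)
      = (Real.sqrt (2 * Real.pi))⁻¹ * Real.exp (-(1 / 2 - s) * x ^ 2) := by
    intro x
    simp only [gaussianPDFReal, NNReal.coe_one, mul_one, sub_zero]
    rw [mul_assoc, ← Real.exp_add]
    congr 2
    ring
  constructor
  · rw [gaussianReal_of_var_ne_zero 0 one_ne_zero,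
      integrable_withDensity_iff_integrable_smul' (measurable_gaussianPDF 0 1)
        (ae_of_all _ fun x => gaussianPDF_lt_top)]
    simp only [toReal_gaussianPDF, smul_eq_mul, key]
    exact (integrable_exp_neg_mul_sq hb).const_mul _
  · rw [integral_gaussianReal_eq_integral_smul one_ne_zero]
    simp only [smul_eq_mul, key]
    rw [integral_const_mul, integral_gaussian, ← Real.sqrt_inv, ← Real.sqrt_mul (by positivity)]
    congr 1
    have : 1 - 2 * s ≠ 0 := by linarith
    have h2 := Real.pi_ne_zero
    have h3 := hb.ne'
    field_simp

lemma aux_chernoff (n : ℕ) (τ : ℝ) (hτ : 0 < τ) :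
    (Measure.pi fun _ : Fin n => gaussianReal 0 1).real
      {y | (n : ℝ) * (1 + τ) ≤ ∑ i, (y i) ^ 2}
      ≤ Real.exp (-((n : ℝ) / 2) * (τ - Real.log (1 + τ))) := by
  set s : ℝ := τ / (2 * (1 + τ)) with hs
  have hs0 : 0 ≤ s := by positivity
  have hs1 : s < 1 / 2 := by
    rw [hs, div_lt_div_iff₀ (by positivity) (by norm_num)]; linarith
  obtain ⟨hi, he⟩ := aux_exp_sq_lint s hs1
  have hprod : (fun y : Fin n → ℝ => Real.exp (s * ∑ i, (y i) ^ 2))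
      = fun y => ∏ i, Real.exp (s * (y i) ^ 2) := by
    ext y
    rw [← Real.exp_sum, Finset.mul_sum]
  have h := measure_ge_le_exp_mul_mgf (μ := Measure.pi fun _ : Fin n => gaussianReal 0 1)
    (X := fun y => ∑ i, (y i) ^ 2) (t := s) ((n : ℝ) * (1 + τ)) hs0 (by
      rw [hprod]
      exact Integrable.fintype_prod (f := fun _ x => Real.exp (s * x ^ 2)) fun _ => hi)
  refine h.trans (le_of_eq ?_)
  have h1 : 1 / (1 - 2 * s) = 1 + τ := by
    rw [hs]; field_simp; ring
  rw [mgf, hprod, integral_fintype_prod_eq_pow (fun x : ℝ => Real.exp (s * x ^ 2)), he, h1,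
    Fintype.card_fin]
  have h2 : Real.sqrt (1 + τ) = Real.exp (Real.log (1 + τ) / 2) := by
    rw [← Real.log_sqrt (by positivity), Real.exp_log (by positivity)]
  rw [h2, ← Real.exp_nat_mul, ← Real.exp_add]
  congr 1
  rw [hs]; field_simp; ring

lemma aux_rot (n : ℕ) (d : Fin (n + 1) → ℝ) (D : ℝ) (hD : 0 < D) (hd : ∑ i, d i ^ 2 = D ^ 2) :
    ∃ T : (Fin (n + 1) → ℝ) → (Fin (n + 1) → ℝ),
      MeasurePreserving T (Measure.pi fun _ => gaussianReal 0 1)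
        (Measure.pi fun _ => gaussianReal 0 1) ∧
      (∀ x, ∑ i, d i * T x i = D * x 0) ∧ ∀ x, ∑ i, (T x i) ^ 2 = ∑ i, x i ^ 2 := by
  let u : EuclideanSpace ℝ (Fin (n + 1)) := WithLp.toLp 2 d
  have hu : ‖u‖ = D := by
    rw [EuclideanSpace.norm_eq]
    simp only [u, Real.norm_eq_abs, sq_abs, hd]
    exact Real.sqrt_sq hD.le
  obtain ⟨b, hb⟩ := Orthonormal.exists_orthonormalBasis_extension_of_card_eq
    (𝕜 := ℝ) (E := EuclideanSpace ℝ (Fin (n + 1))) (ι := Fin (n + 1)) (by simp)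
    (v := fun _ => D⁻¹ • u) (s := {0}) (by
      rw [orthonormal_iff_ite]
      rintro ⟨i, hi⟩ ⟨j, hj⟩
      simp only [Set.mem_singleton_iff] at hi hj
      subst hi; subst hj
      have hn : ‖D⁻¹ • u‖ = 1 := by
        rw [norm_smul, hu, Real.norm_of_nonneg (by positivity), inv_mul_cancel₀ hD.ne']
      simp [hn])
  have hb0 : b 0 = D⁻¹ • u := hb 0 rfl
  have hu' : u = D • b 0 := by rw [hb0, smul_smul, mul_inv_cancel₀ hD.ne', one_smul]
  refine ⟨fun x => WithLp.ofLp (∑ i, x i • b i), ⟨by fun_prop, ?_⟩, fun x => ?_, fun x => ?_⟩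
  · have h1 := stdGaussian_eq_map_pi_orthonormalBasis b
    rw [← map_pi_eq_stdGaussian] at h1
    have h2 := congrArg (Measure.map (WithLp.ofLp (p := 2) (V := Fin (n + 1) → ℝ))) h1
    rw [Measure.map_map (by fun_prop) (by fun_prop),
      Measure.map_map (by fun_prop) (by fun_prop)] at h2
    refine h2.symm.trans ?_
    exact Measure.map_id
  · have : inner ℝ u (∑ i, x i • b i) = D * x 0 := by
      rw [hu', real_inner_smul_left, b.orthonormal.inner_right_fintype]
    rw [← this, PiLp.inner_apply]
    simp [u, mul_comm]
  · have h := b.sum_sq_inner_right (∑ i, x i • b i)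
    simp only [b.orthonormal.inner_right_fintype] at h
    rw [h, EuclideanSpace.real_norm_sq_eq]

/-- Theorem 1: for `m₁, m₂ ∈ ℝ^p`, `σ₁, σ₂ > 0`, `A` with i.i.d. `N(0,1)` entries,
`γ > 0` and `α = γ²(σ₁+σ₂)²p/‖m₁-m₂‖²`, for any `τ > 0`,
`P(|⟨m₁-m₂, A/‖A‖⟩| ≥ γ(σ₁+σ₂)) ≥ P(A₁² > α(1-1/p)(1+τ)/(1-α/p)) · (1 - e^{-(p-1)(τ-log(1+τ))/2})`. -/
theorem prob_separability_lower_bound (p : ℕ) (hp : 0 < p) (m₁ m₂ : Fin p → ℝ)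
    (hm : m₁ ≠ m₂) (σ₁ σ₂ : ℝ) (hσ₁ : 0 < σ₁) (hσ₂ : 0 < σ₂) (γ : ℝ) (hγ : 0 < γ)
    (α : ℝ) (hα : α = γ ^ 2 * (σ₁ + σ₂) ^ 2 * p / (∑ i, (m₁ i - m₂ i) ^ 2))
    (hαp : α / p < 1) (τ : ℝ) (hτ : 0 < τ) :
    ((Measure.pi fun _ : Fin p => gaussianReal 0 1)
        {a | γ * (σ₁ + σ₂) ≤ |∑ i, (m₁ i - m₂ i) * a i| / Real.sqrt (∑ i, (a i) ^ 2)}).toReal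
      ≥ ((Measure.pi fun _ : Fin p => gaussianReal 0 1)
            {a | α * (1 - 1 / (p : ℝ)) / (1 - α / p) * (1 + τ) < (a ⟨0, hp⟩) ^ 2}).toReal
        * (1 - Real.exp (-(((p : ℝ) - 1) / 2) * (τ - Real.log (1 + τ)))) := by
  obtain ⟨n, rfl⟩ : ∃ n, p = n + 1 := ⟨p - 1, by omega⟩
  set d : Fin (n + 1) → ℝ := fun i => m₁ i - m₂ i with hd
  have hS : 0 < ∑ i, d i ^ 2 := by
    obtain ⟨j, hj⟩ := Function.ne_iff.mp hm
    refine Finset.sum_pos' (fun i _ => sq_nonneg _) ⟨j, Finset.mem_univ _, ?_⟩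
    have : d j ≠ 0 := sub_ne_zero.mpr hj
    positivity
  set D : ℝ := Real.sqrt (∑ i, d i ^ 2) with hDdef
  have hD : 0 < D := Real.sqrt_pos.mpr hS
  have hDS : ∑ i, d i ^ 2 = D ^ 2 := (Real.sq_sqrt hS.le).symm
  obtain ⟨T, hT, hT1, hT2⟩ := aux_rot n d D hD hDS
  set c : ℝ := γ * (σ₁ + σ₂) with hc
  have hc0 : 0 < c := by positivity
  have hq : α / ((n + 1 : ℕ) : ℝ) = c ^ 2 / D ^ 2 := by
    rw [hα, hc]
    change γ ^ 2 * (σ₁ + σ₂) ^ 2 * ((n + 1 : ℕ) : ℝ) / (∑ i, d i ^ 2) / ((n + 1 : ℕ) : ℝ) = _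
    rw [hDS]
    have : ((n + 1 : ℕ) : ℝ) ≠ 0 := by positivity
    field_simp
  set q : ℝ := α / ((n + 1 : ℕ) : ℝ) with hqdef
  have hq0 : 0 < q := by rw [hq]; positivity
  have hβ : α * (1 - 1 / ((n + 1 : ℕ) : ℝ)) / (1 - q) * (1 + τ) = q * n * (1 + τ) / (1 - q) := by
    have h1 : ((n + 1 : ℕ) : ℝ) ≠ 0 := by positivity
    have h2 : α * (1 - 1 / ((n + 1 : ℕ) : ℝ)) = q * n := by
      rw [hqdef]; field_simp; push_cast; ring
    rw [h2]; ring
  rw [hβ]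
  set β : ℝ := q * n * (1 + τ) / (1 - q) with hβdef
  have hq1 : 0 < 1 - q := by linarith
  have hβ0 : 0 ≤ β := by positivity
  set μ : Measure (Fin (n + 1) → ℝ) := Measure.pi fun _ => gaussianReal 0 1 with hμ
  let ν : Measure (Fin n → ℝ) := Measure.pi fun _ => gaussianReal 0 1
  have hP := measurePreserving_piFinSuccAbove (fun _ : Fin (n + 1) => gaussianReal 0 1) 0
  set B : Set (Fin n → ℝ) := {y | (n : ℝ) * (1 + τ) ≤ ∑ i, (y i) ^ 2} with hB
  have hBm : MeasurableSet B := measurableSet_le (by fun_prop) (by fun_prop)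
  set A : Set ℝ := {x | β < x ^ 2} with hA
  have hAm : MeasurableSet A := measurableSet_lt (by fun_prop) (by fun_prop)
  have e0 : (⟨0, hp⟩ : Fin (n + 1)) = 0 := rfl
  rw [e0]
  have hR1 : μ {a | β < a 0 ^ 2} = gaussianReal 0 1 A := by
    have := (measurePreserving_eval (fun _ : Fin (n + 1) => gaussianReal 0 1) 0).measure_preimage
      hAm.nullMeasurableSet
    exact this
  have hprod : μ {x | x 0 ∈ A ∧ (fun i : Fin n => x i.succ) ∈ Bᶜ}
      = gaussianReal 0 1 A * ν Bᶜ := by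
    have := hP.measure_preimage (hAm.prod hBm.compl).nullMeasurableSet
    rw [Measure.prod_prod] at this
    exact this
  have hSm : MeasurableSet {a : Fin (n + 1) → ℝ |
      c ≤ |∑ i, d i * a i| / Real.sqrt (∑ i, (a i) ^ 2)} :=
    measurableSet_le (by fun_prop) (by fun_prop)
  have hle : μ {x | x 0 ∈ A ∧ (fun i : Fin n => x i.succ) ∈ Bᶜ}
      ≤ μ {a | c ≤ |∑ i, d i * a i| / Real.sqrt (∑ i, (a i) ^ 2)} := by
    rw [← hT.measure_preimage hSm.nullMeasurableSet]
    refine measure_mono ?_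
    rintro x ⟨hxA, hxB⟩
    simp only [hA, hB, Set.mem_ofPred_eq, Set.mem_compl_iff, not_le] at hxA hxB
    simp only [Set.mem_preimage, Set.mem_ofPred_eq, hT1, hT2]
    have hx0 : 0 < x 0 ^ 2 := hβ0.trans_lt hxA
    have hN : ∑ i, x i ^ 2 = x 0 ^ 2 + ∑ i : Fin n, x i.succ ^ 2 := Fin.sum_univ_succ _
    have hNpos : 0 < ∑ i, x i ^ 2 := by
      rw [hN]
      have : 0 ≤ ∑ i : Fin n, x i.succ ^ 2 := Finset.sum_nonneg fun i _ => sq_nonneg _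
      linarith
    rw [le_div_iff₀ (Real.sqrt_pos.mpr hNpos)]
    refine (pow_le_pow_iff_left₀ (by positivity) (by positivity) two_ne_zero).mp ?_
    rw [mul_pow c, Real.sq_sqrt hNpos.le, sq_abs, mul_pow D]
    have hcq : c ^ 2 = q * D ^ 2 := by rw [hq]; field_simp
    rw [hcq, mul_comm q, mul_assoc (D ^ 2)]
    refine mul_le_mul_of_nonneg_left ?_ (by positivity)
    rw [hN]
    rw [hβdef, div_lt_iff₀ hq1] at hxA
    have := mul_lt_mul_of_pos_left hxB hq0
    linarith
  have hch : 1 - Real.exp (-((((n + 1 : ℕ) : ℝ) - 1) / 2) * (τ - Real.log (1 + τ)))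
      ≤ (ν Bᶜ).toReal := by
    have h1 := aux_chernoff n τ hτ
    have h2 : ν.real Bᶜ = 1 - ν.real B := probReal_compl_eq_one_sub hBm
    have h3 : (((n + 1 : ℕ) : ℝ) - 1) = n := by push_cast; ring
    rw [h3]
    change _ ≤ ν.real Bᶜ
    rw [h2]
    linarith
  rw [hR1]
  calc _ ≥ (μ {x | x 0 ∈ A ∧ (fun i : Fin n => x i.succ) ∈ Bᶜ}).toReal :=
        ENNReal.toReal_mono (measure_ne_top _ _) hle
    _ = (gaussianReal 0 1 A).toReal * (ν Bᶜ).toReal := by rw [hprod, ENNReal.toReal_mul]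
    _ ≥ _ := mul_le_mul_of_nonneg_left hch ENNReal.toReal_nonneg
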